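/- Let H be a real Hilbert space and F ⊆ H a nonempty compact set. Let (f_m)_{m ≥ 0} be a sequence in F, set V_n := span{f_0, …, f_{n−1}} (with V_0 = {0}), define σ_n(F) := sup_{f ∈ F} dist(f, V_n), and let d_n(F) := inf { sup_{f ∈ F} dist(f, Y) : Y is a subspace of H with dim Y ≤ n } be the Kolmogorov n-width. Suppose the sequence is weak greedy with parameter γ ∈ (0, 1], i.e. dist(f_n, V_n) ≥ γ · σ_n(F) for all n, and suppose the n-widths decay exponentially: there exist C₀ > 0 and γ̂ > log(1 + γ^{−1}) such that d_n(F) ≤ C₀ e^{−γ̂ n} for all n ≥ 0. Then there exist constants ζ > 0 and C > 0 such that σ_n(F) ≤ C · C₀ · e^{−ζ n} for all n ≥ 0; in particular, for every f ∈ F, inf_{w ∈ V_n} ‖f − w‖ ≤ C · C₀ · e^{−ζ n}. -/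

import Mathlib

/-- The space spanned by the first `n` greedily selected elements. -/
noncomputable def greedySpace {H : Type*} [NormedAddCommGroup H] [InnerProductSpace ℝ H]
    (f : ℕ → H) (n : ℕ) : Submodule ℝ H :=
  Submodule.span ℝ (f '' Set.Iio n)

/-- The worst-case error `σ_n(F)` of the `n`-th greedy space. -/
noncomputable def greedyError {H : Type*} [NormedAddCommGroup H] [InnerProductSpace ℝ H]
    (F : Set H) (f : ℕ → H) (n : ℕ) : ℝ :=
  ⨆ g : F, Metric.infDist (g : H) (greedySpace f n : Set H)

/-- The Kolmogorov `n`-width `d_n(F)` of a set `F` in `H`. -/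
noncomputable def kolmogorovWidth {H : Type*} [NormedAddCommGroup H] [InnerProductSpace ℝ H]
    (F : Set H) (n : ℕ) : ℝ :=
  sInf { r : ℝ | ∃ Y : Submodule ℝ H, FiniteDimensional ℝ Y ∧ Module.finrank ℝ Y ≤ n ∧
    r = ⨆ g : F, Metric.infDist (g : H) (Y : Set H) }

open InnerProductSpace in
/-- Orthonormal vectors outnumbering the dimension of `Y` have total squared distance at least one. -/
lemma one_le_sum_dist {H : Type*} [NormedAddCommGroup H] [InnerProductSpace ℝ H]
    (Y : Submodule ℝ H) [FiniteDimensional ℝ Y] (n : ℕ) (hY : Module.finrank ℝ Y ≤ n)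
    (e : Fin (n + 1) → H) (he : Orthonormal ℝ e) :
    1 ≤ ∑ i, ‖Yᗮ.starProjection (e i)‖ ^ 2 := by
  have b := stdOrthonormalBasis ℝ Y
  have h1 : ∀ i, ‖Y.starProjection (e i)‖ ^ 2 = ∑ k, ‖inner ℝ (e i) (b k : H)‖ ^ 2 := by
    intro i
    have h := b.sum_sq_norm_inner_left (Y.orthogonalProjectionOnto (e i))
    rw [Submodule.starProjection_apply, ← Submodule.coe_norm, ← h]
    refine Finset.sum_congr rfl fun k _ => ?_
    simp
  have h2 : ∑ i, ‖Y.starProjection (e i)‖ ^ 2 ≤ n := by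
    simp_rw [h1]
    rw [Finset.sum_comm]
    have h3 : ∀ k, ∑ i, ‖inner ℝ (e i) (b k : H)‖ ^ 2 ≤ 1 := by
      intro k
      have h4 := he.sum_inner_products_le (x := (b k : H)) (s := Finset.univ)
      have h5 : ‖(b k : H)‖ = 1 := by
        rw [← Submodule.coe_norm]; exact b.orthonormal.1 k
      rw [h5] at h4
      simpa using h4
    calc _ ≤ ∑ k : Fin (Module.finrank ℝ Y), (1 : ℝ) := Finset.sum_le_sum fun k _ => h3 k
      _ = (Module.finrank ℝ Y : ℝ) := by simp
      _ ≤ n := by exact_mod_cast hY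
  have h6 : ∀ i, ‖Yᗮ.starProjection (e i)‖ ^ 2 = 1 - ‖Y.starProjection (e i)‖ ^ 2 := by
    intro i
    have := Submodule.norm_sq_eq_add_norm_sq_starProjection (e i) Y
    rw [he.1 i] at this
    linarith
  simp_rw [h6]
  rw [Finset.sum_sub_distrib]
  simp
  linarith

lemma infDist_bdd {H : Type*} [NormedAddCommGroup H] [InnerProductSpace ℝ H]
    {F : Set H} (hF : IsCompact F) (Y : Submodule ℝ H) :
    BddAbove (Set.range fun g : F => Metric.infDist (g : H) (Y : Set H)) := by
  obtain ⟨R, hR⟩ := hF.isBounded.exists_norm_le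
  refine ⟨R, ?_⟩
  rintro _ ⟨g, rfl⟩
  refine (Metric.infDist_le_dist_of_mem Y.zero_mem).trans ?_
  rw [dist_zero_right]
  exact hR g g.2

lemma infDist_le_sup {H : Type*} [NormedAddCommGroup H] [InnerProductSpace ℝ H]
    {F : Set H} (hF : IsCompact F) (Y : Submodule ℝ H) {g : H} (hg : g ∈ F) :
    Metric.infDist g (Y : Set H) ≤ ⨆ g : F, Metric.infDist (g : H) (Y : Set H) :=
  le_ciSup (infDist_bdd hF Y) ⟨g, hg⟩

lemma norm_perp_eq_infDist {H : Type*} [NormedAddCommGroup H] [InnerProductSpace ℝ H]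
    (Y : Submodule ℝ H) [FiniteDimensional ℝ Y] (x : H) :
    ‖Yᗮ.starProjection x‖ = Metric.infDist x (Y : Set H) := by
  rw [Submodule.starProjection_orthogonal_val, Submodule.starProjection_minimal,
    Metric.infDist_eq_iInf]
  simp_rw [dist_eq_norm]
  rfl

lemma greedyError_anti {H : Type*} [NormedAddCommGroup H] [InnerProductSpace ℝ H]
    {F : Set H} (hF : IsCompact F) (hFne : F.Nonempty) (f : ℕ → H) {i n : ℕ} (h : i ≤ n) :
    greedyError F f n ≤ greedyError F f i := by
  have := hFne.to_subtype
  unfold greedyError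
  refine ciSup_mono (infDist_bdd hF _) fun g => ?_
  refine Metric.infDist_le_infDist_of_subset ?_ ⟨0, Submodule.zero_mem _⟩
  exact Submodule.span_mono (Set.image_mono (Set.Iio_subset_Iio h))

open InnerProductSpace in
lemma infDist_le_norm_gs {H : Type*} [NormedAddCommGroup H] [InnerProductSpace ℝ H]
    (f : ℕ → H) (i : ℕ) :
    Metric.infDist (f i) (greedySpace f i : Set H) ≤ ‖gramSchmidt ℝ f i‖ := by
  have h : f i - gramSchmidt ℝ f i ∈ greedySpace f i := by
    unfold greedySpace
    rw [← span_gramSchmidt_Iio ℝ f i]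
    nth_rewrite 1 [gramSchmidt_def'' ℝ f i]
    rw [add_sub_cancel_left]
    refine Submodule.sum_mem _ fun j hj => Submodule.smul_mem _ _ (Submodule.subset_span ?_)
    exact ⟨j, by simpa using hj, rfl⟩
  refine (Metric.infDist_le_dist_of_mem h).trans ?_
  rw [dist_eq_norm, sub_sub_cancel]

open InnerProductSpace in
lemma inner_gs_le {H : Type*} [NormedAddCommGroup H] [InnerProductSpace ℝ H]
    (f : ℕ → H) (j : ℕ) (x : H) :
    |inner ℝ (gramSchmidt ℝ f j) x| ≤
      ‖gramSchmidt ℝ f j‖ * Metric.infDist x (greedySpace f j : Set H) := by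
  have h0 : ∀ v ∈ greedySpace f j, inner ℝ (gramSchmidt ℝ f j) v = 0 := by
    intro v hv
    unfold greedySpace at hv
    induction hv using Submodule.span_induction with
    | mem x h =>
      obtain ⟨k, hk, rfl⟩ := h
      exact gramSchmidt_inv_triangular ℝ f hk
    | zero => simp
    | add x y _ _ hx hy => rw [inner_add_right, hx, hy, add_zero]
    | smul a x _ hx => rw [inner_smul_right, hx, mul_zero]
  rcases (norm_nonneg (gramSchmidt ℝ f j)).eq_or_lt with hz | hz
  · have : gramSchmidt ℝ f j = 0 := norm_eq_zero.1 hz.symm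
    simp [this]
  rw [← div_le_iff₀' hz]
  rw [Metric.le_infDist ⟨0, Submodule.zero_mem _⟩]
  intro v hv
  rw [div_le_iff₀' hz, dist_eq_norm]
  have h1 : inner ℝ (gramSchmidt ℝ f j) x = inner ℝ (gramSchmidt ℝ f j) (x - v) := by
    rw [inner_sub_right, h0 v hv, sub_zero]
  rw [h1]
  exact abs_real_inner_le_norm _ _

lemma geom_aux (q : ℝ) (hq : 2 ≤ q) (n : ℕ) :
    ∑ i ∈ Finset.range (n + 1), (q ^ i) ^ 2 ≤ (2 * q ^ n) ^ 2 := by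
  induction n with
  | zero => norm_num
  | succ n ih =>
    rw [Finset.sum_range_succ]
    have h : 2 * q ^ n ≤ q ^ (n + 1) := by
      rw [pow_succ']; gcongr
    have h2 : (2 * q ^ n) ^ 2 ≤ (q ^ (n + 1)) ^ 2 := by gcongr
    nlinarith [sq_nonneg (q ^ (n + 1))]

open InnerProductSpace in
lemma greedy_main {H : Type*} [NormedAddCommGroup H] [InnerProductSpace ℝ H]
    (F : Set H) (hF : IsCompact F) (hFne : F.Nonempty)
    (f : ℕ → H) (hfF : ∀ m, f m ∈ F)
    (γ : ℝ) (hγ0 : 0 < γ) (hγ1 : γ ≤ 1)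
    (hgreedy : ∀ n, γ * greedyError F f n ≤ Metric.infDist (f n) (greedySpace f n : Set H))
    (n : ℕ) (hpos : 0 < greedyError F f n)
    (Y : Submodule ℝ H) [FiniteDimensional ℝ Y] (hY : Module.finrank ℝ Y ≤ n) :
    γ * greedyError F f n ≤
      2 * (1 + γ⁻¹) ^ n * ⨆ g : F, Metric.infDist (g : H) (Y : Set H) := by
  set r := ⨆ g : F, Metric.infDist (g : H) (Y : Set H) with hr
  set q := 1 + γ⁻¹ with hq
  have hinv : 1 ≤ γ⁻¹ := (one_le_inv₀ hγ0).2 hγ1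
  have hq2 : 2 ≤ q := by linarith
  have hfr : ∀ i, ‖Yᗮ.starProjection (f i)‖ ≤ r := fun i => by
    rw [norm_perp_eq_infDist]; exact infDist_le_sup hF Y (hfF i)
  have hr0 : 0 ≤ r := (norm_nonneg _).trans (hfr 0)
  have hσ : ∀ i ≤ n, 0 < greedyError F f i := fun i hi =>
    hpos.trans_le (greedyError_anti hF hFne f hi)
  have hgs : ∀ i, γ * greedyError F f i ≤ ‖gramSchmidt ℝ f i‖ := fun i =>
    (hgreedy i).trans (infDist_le_norm_gs f i)
  have hgpos : ∀ i ≤ n, 0 < ‖gramSchmidt ℝ f i‖ := fun i hi =>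
    (mul_pos hγ0 (hσ i hi)).trans_le (hgs i)
  have hc : ∀ i, ∀ j ≤ n,
      |inner ℝ (gramSchmidt ℝ f j) (f i) / ‖gramSchmidt ℝ f j‖ ^ 2| ≤ γ⁻¹ := by
    intro i j hj
    have hp := hgpos j hj
    rw [abs_div, abs_of_pos (pow_pos hp 2), div_le_iff₀ (pow_pos hp 2)]
    have h1 := inner_gs_le f j (f i)
    have h2 : Metric.infDist (f i) (greedySpace f j : Set H) ≤ greedyError F f j :=
      infDist_le_sup hF _ (hfF i)
    have h3 : greedyError F f j ≤ γ⁻¹ * ‖gramSchmidt ℝ f j‖ := by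
      rw [le_inv_mul_iff₀ hγ0]; exact hgs j
    calc _ ≤ _ := h1
      _ ≤ ‖gramSchmidt ℝ f j‖ * (γ⁻¹ * ‖gramSchmidt ℝ f j‖) := by
        gcongr; exact h2.trans h3
      _ = _ := by ring
  have hD : ∀ i ≤ n, ‖Yᗮ.starProjection (gramSchmidt ℝ f i)‖ ≤ r * q ^ i := by
    intro i
    induction i using Nat.strong_induction_on with
    | _ i ih =>
      intro hi
      have h1 : gramSchmidt ℝ f i = f i - ∑ j ∈ Finset.Iio i,
          (inner ℝ (gramSchmidt ℝ f j) (f i) / ‖gramSchmidt ℝ f j‖ ^ 2) •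
            gramSchmidt ℝ f j := by
        rw [eq_sub_iff_add_eq]
        exact (gramSchmidt_def'' ℝ f i).symm
      rw [h1, map_sub, map_sum]
      refine (norm_sub_le _ _).trans ?_
      have h2 : ‖∑ j ∈ Finset.Iio i, Yᗮ.starProjection
          ((inner ℝ (gramSchmidt ℝ f j) (f i) / ‖gramSchmidt ℝ f j‖ ^ 2) •
            gramSchmidt ℝ f j)‖ ≤ ∑ j ∈ Finset.Iio i, γ⁻¹ * (r * q ^ j) := by
        refine norm_sum_le_of_le _ fun j hj => ?_
        have hj' : j < i := by simpa using hj
        rw [map_smul, norm_smul, Real.norm_eq_abs]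
        exact mul_le_mul (hc i j (by omega)) (ih j hj' (by omega)) (norm_nonneg _)
          (by positivity)
      have h3 : ∑ j ∈ Finset.Iio i, γ⁻¹ * (r * q ^ j) = r * (q ^ i - 1) := by
        have h4 := geom_sum_mul q i
        have h5 : q - 1 = γ⁻¹ := by rw [hq]; ring
        rw [Nat.Iio_eq_range, ← h4, h5, ← Finset.mul_sum, ← Finset.mul_sum]
        ring
      rw [h3] at h2
      linarith [hfr i]
  set s := γ * greedyError F f n with hs
  have hs0 : 0 < s := mul_pos hγ0 hpos
  have hsg : ∀ i ≤ n, s ≤ ‖gramSchmidt ℝ f i‖ := fun i hi =>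
    (mul_le_mul_of_nonneg_left (greedyError_anti hF hFne f hi) hγ0.le).trans (hgs i)
  let e : Fin (n + 1) → H := fun i => (‖gramSchmidt ℝ f i‖⁻¹) • gramSchmidt ℝ f i
  have he : Orthonormal ℝ e := by
    constructor
    · intro i
      have := hgpos i (by omega)
      simp only [e, norm_smul, norm_inv, norm_norm]
      exact inv_mul_cancel₀ this.ne'
    · intro i j hij
      simp only [e, inner_smul_left, inner_smul_right]
      rw [gramSchmidt_orthogonal ℝ f (fun h => hij (Fin.ext h))]
      simp
  have h1 := one_le_sum_dist Y n hY e he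
  have h2 : ∀ i : Fin (n + 1), ‖Yᗮ.starProjection (e i)‖ ^ 2 ≤
      (s⁻¹ * r) ^ 2 * (q ^ (i : ℕ)) ^ 2 := by
    intro i
    have hi : (i : ℕ) ≤ n := by omega
    rw [← mul_pow]
    simp only [e, map_smul, norm_smul, norm_inv, norm_norm]
    rw [mul_assoc]
    gcongr
    · exact hsg i hi
    · exact hD i hi
  have h3 : 1 ≤ (s⁻¹ * r) ^ 2 * (2 * q ^ n) ^ 2 := by
    calc 1 ≤ _ := h1
      _ ≤ ∑ i : Fin (n + 1), (s⁻¹ * r) ^ 2 * (q ^ (i : ℕ)) ^ 2 :=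
        Finset.sum_le_sum fun i _ => h2 i
      _ = (s⁻¹ * r) ^ 2 * ∑ i ∈ Finset.range (n + 1), (q ^ i) ^ 2 := by
        rw [← Finset.mul_sum, Finset.sum_range]
      _ ≤ _ := by gcongr; exact geom_aux q hq2 n
  rw [← mul_pow] at h3
  have h4 : 1 ≤ s⁻¹ * r * (2 * q ^ n) := by
    have : 0 ≤ s⁻¹ * r * (2 * q ^ n) := by positivity
    by_contra! hlt
    nlinarith
  rw [mul_assoc, le_inv_mul_iff₀ hs0] at h4
  linarith

/-- If the Kolmogorov widths decay exponentially with rate exceeding `log(1 + γ⁻¹)`,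
then the weak greedy spaces achieve exponential accuracy. -/
theorem stmt_7
    {H : Type*} [NormedAddCommGroup H] [InnerProductSpace ℝ H] [CompleteSpace H]
    (F : Set H) (hFcompact : IsCompact F) (hFne : F.Nonempty)
    (f : ℕ → H) (hfF : ∀ m, f m ∈ F)
    (γ : ℝ) (hγ0 : 0 < γ) (hγ1 : γ ≤ 1)
    (hgreedy : ∀ n, γ * greedyError F f n ≤ Metric.infDist (f n) (greedySpace f n : Set H))
    (C₀ : ℝ) (hC₀ : 0 < C₀)
    (γhat : ℝ) (hγhat : Real.log (1 + γ⁻¹) < γhat)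
    (hdecay : ∀ n : ℕ, kolmogorovWidth F n ≤ C₀ * Real.exp (-γhat * n)) :
    ∃ ζ > (0 : ℝ), ∃ C > (0 : ℝ),
      (∀ n : ℕ, greedyError F f n ≤ C * C₀ * Real.exp (-ζ * n)) ∧
      ∀ n : ℕ, ∀ g ∈ F,
        Metric.infDist g (greedySpace f n : Set H) ≤ C * C₀ * Real.exp (-ζ * n) := by
  have hq0 : 0 < 1 + γ⁻¹ := by positivity
  have key : ∀ n : ℕ, greedyError F f n ≤
      2 / γ * C₀ * Real.exp (-(γhat - Real.log (1 + γ⁻¹)) * n) := by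
    intro n
    rcases le_or_gt (greedyError F f n) 0 with h | hpos
    · exact h.trans (by positivity)
    have h1 : γ * greedyError F f n / (2 * (1 + γ⁻¹) ^ n) ≤ kolmogorovWidth F n := by
      unfold kolmogorovWidth
      refine le_csInf ⟨_, ⊥, inferInstance, by simp, rfl⟩ ?_
      rintro _ ⟨Y, hfd, hY, rfl⟩
      rw [div_le_iff₀' (by positivity)]
      exact greedy_main F hFcompact hFne f hfF γ hγ0 hγ1 hgreedy n hpos Y hY
    have h2 := h1.trans (hdecay n)
    rw [div_le_iff₀' (by positivity)] at h2
    have h3 : Real.exp (-(γhat - Real.log (1 + γ⁻¹)) * n) =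
        (1 + γ⁻¹) ^ n * Real.exp (-γhat * n) := by
      have h4 : (1 + γ⁻¹) ^ n = Real.exp (n * Real.log (1 + γ⁻¹)) := by
        rw [Real.exp_nat_mul, Real.exp_log hq0]
      rw [h4, ← Real.exp_add]
      congr 1
      ring
    rw [h3]
    have h5 : greedyError F f n ≤
        (2 * (1 + γ⁻¹) ^ n * (C₀ * Real.exp (-γhat * n))) / γ := by
      rwa [le_div_iff₀' hγ0]
    refine h5.trans (le_of_eq ?_)
    ring
  refine ⟨γhat - Real.log (1 + γ⁻¹), by linarith, 2 / γ, by positivity, key, ?_⟩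
  intro n g hg
  exact (infDist_le_sup hFcompact _ hg).trans (key n)
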